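/- If h : J → J is a C¹ involution on an open interval J containing 0 with h(0) = 0 and h ≠ id, then h'(x) < 0 for all x ∈ J and h'(0) = −1. -/

import Mathlib

/-!
Differentiating `h ∘ h = id` gives `h' (h x) * h' x = 1` on `J`, so `h'` vanishes nowhere and, by
Darboux's theorem, has constant sign. If it were positive, `h` would be strictly increasing, and an
increasing involution is the identity. Hence `h' < 0` on `J`, and since `h 0 = 0` the identity
at `0` reads `h' 0 ^ 2 = 1`.
-/

theorem smooth_involution_deriv_neg
    (J : Set ℝ) (hJopen : IsOpen J) (hJconn : J.OrdConnected) (h0J : (0:ℝ) ∈ J)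
    (h h' : ℝ → ℝ) (hmaps : Set.MapsTo h J J)
    (hderiv : ∀ x ∈ J, HasDerivAt h (h' x) x)
    (hderiv_cont : ContinuousOn h' J)
    (hinv : ∀ x ∈ J, h (h x) = x)
    (h0 : h 0 = 0)
    (hne : ∃ x ∈ J, h x ≠ x) :
    (∀ x ∈ J, h' x < 0) ∧ h' 0 = -1 := by
  have hconv : Convex ℝ J := hJconn.convex
  have hmul : ∀ x ∈ J, h' (h x) * h' x = 1 := by
    intro x hx
    have hcomp : HasDerivAt (h ∘ h) (h' (h x) * h' x) x :=
      (hderiv (h x) (hmaps hx)).comp x (hderiv x hx)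
    have heq : h ∘ h =ᶠ[nhds x] id := by
      filter_upwards [hJopen.mem_nhds hx] with y hy using hinv y hy
    exact hcomp.unique ((hasDerivAt_id x).congr_of_eventuallyEq heq)
  have hneg : ∀ x ∈ J, h' x < 0 := by
    rcases hasDerivWithinAt_forall_lt_or_forall_gt_of_forall_ne hconv
      (fun x hx => (hderiv x hx).hasDerivWithinAt) (m := 0)
      (fun x hx => right_ne_zero_of_mul_eq_one (hmul x hx)) with hlt | hgt
    · exact hlt
    · have hmono : StrictMonoOn h J := by
        refine strictMonoOn_of_deriv_pos hconv
          (fun x hx => (hderiv x hx).continuousAt.continuousWithinAt) fun x hx => ?_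
        have hxJ := interior_subset hx
        rw [(hderiv x hxJ).deriv]
        exact hgt x hxJ
      obtain ⟨x, hx, hxne⟩ := hne
      rcases lt_or_gt_of_ne hxne with hlt | hgt
      · have := hmono (hmaps hx) hx hlt
        rw [hinv x hx] at this
        exact absurd this hlt.not_gt
      · have := hmono hx (hmaps hx) hgt
        rw [hinv x hx] at this
        exact absurd this hgt.not_gt
  refine ⟨hneg, ?_⟩
  have hsq := hmul 0 h0J
  rw [h0] at hsq
  nlinarith [hneg 0 h0J]
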